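/- Let σ be a noncrossing partition of [n]. An (n−1)-element subset I ⊆ [2n] is concordant with σ if and only if I_a(σ) ≤_a I for every a ∈ [2n], in the a-shifted dominance order. -/

import Mathlib

open Finset

noncomputable section
open scoped Classical

/-- The cyclic (clockwise) half-open interval `(a, b]` in `Fin m`. -/
def cIoc {m : ℕ} (a b : Fin m) : Finset (Fin m) :=
  univ.filter fun k => if a < b then a < k ∧ k ≤ b else a < k ∨ k ≤ b

/-- The open cyclic (clockwise) arc from `a` to `b` in `Fin m`, excluding both endpoints. -/
def cIoo {m : ℕ} (a b : Fin m) : Finset (Fin m) :=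
  univ.filter fun k => if a < b then a < k ∧ k < b else (a < k ∨ k < b) ∧ k ≠ a ∧ k ≠ b

/-- Set partitions of `[n] = Fin n`. -/
abbrev NCP (n : ℕ) := Finpartition (univ : Finset (Fin n))

/-- `a` and `b` lie in the same block of `σ`. -/
def sameBlock {n : ℕ} (σ : NCP n) (a b : Fin n) : Prop :=
  ∃ B ∈ σ.parts, a ∈ B ∧ b ∈ B

/-- `σ` is a noncrossing partition: there are no `a < b < c < d` with `a, c` in one
block and `b, d` in a different block. -/
def IsNoncrossing {n : ℕ} (σ : NCP n) : Prop :=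
  ∀ a b c d : Fin n, a < b → b < c → c < d →
    sameBlock σ a c → sameBlock σ b d → sameBlock σ a b

/-- The relation defining the dual (Kreweras complement) partition: `ĩ ~ j̃` iff no block
of `σ` meets both cyclic intervals `{(i+1), …, j}` and `{(j+1), …, i}`. -/
def dualRel {n : ℕ} (σ : NCP n) (i j : Fin n) : Prop :=
  i = j ∨ ¬ ∃ B ∈ σ.parts, (B ∩ cIoc i j).Nonempty ∧ (B ∩ cIoc j i).Nonempty

/-- The point `ī` of `[2n]` (0-based: `ī = 2i`). -/
def bar {n : ℕ} (i : Fin n) : Fin (2*n) := ⟨2*(i:ℕ), by have := i.isLt; omega⟩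

/-- The point `ĩ` of `[2n]` (0-based: `ĩ = 2i+1`). -/
def til {n : ℕ} (i : Fin n) : Fin (2*n) := ⟨2*(i:ℕ)+1, by have := i.isLt; omega⟩

/-- A matching (fixed-point-free involution) of `Fin m`. -/
def IsMatching {m : ℕ} (τ : Fin m → Fin m) : Prop :=
  Function.Involutive τ ∧ ∀ i, τ i ≠ i

/-- A noncrossing matching: there are no `a < b < c < d` with `τ a = c` and `τ b = d`. -/
def IsNCMatching {m : ℕ} (τ : Fin m → Fin m) : Prop :=
  ¬ ∃ a b c d : Fin m, a < b ∧ b < c ∧ c < d ∧ τ a = c ∧ τ b = d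

/-- `j` is the cyclic predecessor of `i` in the block of `σ` containing `i`
(`j = i` when `i` is a singleton). -/
def cyclicPred {n : ℕ} (σ : NCP n) (j i : Fin n) : Prop :=
  ∃ B ∈ σ.parts, i ∈ B ∧ j ∈ B ∧ ∀ x ∈ B, x ∉ cIoo j i

/-- `m` is the medial pairing of `σ`: it pairs `ī` (0-based `2i`) with `j̃` (0-based `2j+1`),
where `j` is the cyclic predecessor of `i` in its block. -/
def IsMedialOf {n : ℕ} (σ : NCP n) (m : Fin (2*n) → Fin (2*n)) : Prop :=
  ∀ i j : Fin n, m (bar i) = til j ↔ cyclicPred σ j i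

/-- The crossing number of a matching: the number of pairs `{a,b}` with
`a < b < τ a < τ b`. -/
def crossNum {m : ℕ} (τ : Fin m → Fin m) : ℕ :=
  ((univ : Finset (Fin m × Fin m)).filter fun p =>
    p.1 < p.2 ∧ p.2 < τ p.1 ∧ τ p.1 < τ p.2).card

/-- `a`, `b`, `c`, `d` are distinct and in cyclic order on `Fin m`. -/
def CyclicOrder4 {m : ℕ} (a b c d : Fin m) : Prop :=
  (a < b ∧ b < c ∧ c < d) ∨ (b < c ∧ c < d ∧ d < a) ∨
  (c < d ∧ d < a ∧ a < b) ∨ (d < a ∧ a < b ∧ b < c)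

/-- `τ` covers `τ'` in the uncrossing order. -/
def UncrossCover {m : ℕ} (τ' τ : Fin m → Fin m) : Prop :=
  IsMatching τ' ∧ IsMatching τ ∧
  ∃ a b c d : Fin m, CyclicOrder4 a b c d ∧ τ a = c ∧ τ b = d ∧
    (∀ x, x ≠ a → x ≠ b → x ≠ c → x ≠ d → τ' x = τ x) ∧
    ((τ' a = d ∧ τ' b = c ∧ ∀ x ∈ cIoo a b, τ x ∉ cIoo c d) ∨
     (τ' a = b ∧ τ' c = d ∧ ∀ x ∈ cIoo b c, τ x ∉ cIoo d a))

/-- The uncrossing partial order on matchings: reflexive-transitive closure of covers. -/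
def uncrossLE {m : ℕ} (τ' τ : Fin m → Fin m) : Prop :=
  Relation.ReflTransGen UncrossCover τ' τ

/-- An affine permutation of period `m`. -/
def IsAffinePerm (m : ℕ) (f : ℤ → ℤ) : Prop :=
  Function.Bijective f ∧ ∀ i : ℤ, f (i + m) = f i + m

/-- The length of an affine permutation of period `m`:
`#{(i,j) : 1 ≤ i ≤ m, i < j, f i > f j}`. -/
def affLen (m : ℕ) (f : ℤ → ℤ) : ℕ :=
  Set.ncard {p : ℤ × ℤ | 1 ≤ p.1 ∧ p.1 ≤ (m:ℤ) ∧ p.1 < p.2 ∧ f p.2 < f p.1}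

/-- The affine rank matrix `r_f(i,j) = #{a ≤ i : f a ≥ j}`. -/
def rankMat (f : ℤ → ℤ) (i j : ℤ) : ℕ :=
  Set.ncard {a : ℤ | a ≤ i ∧ j ≤ f a}

/-- Affine Bruhat order via rank matrices. -/
def bruhatLE (f g : ℤ → ℤ) : Prop := ∀ i j : ℤ, rankMat f i j ≤ rankMat g i j

/-- The sum `Σ_{i=1}^m (f i − i)`. -/
def windowSum (m : ℕ) (f : ℤ → ℤ) : ℤ :=
  ∑ i ∈ Finset.range m, (f ((i:ℤ)+1) - ((i:ℤ)+1))

/-- The affine permutation `g_τ` associated to a matching `τ` of `[2n]`: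
on `[2n]`, `g_τ i = τ i` if `τ i > i` and `g_τ i = τ i + 2n` if `τ i < i`,
extended periodically. -/
def gTau (n : ℕ) (τ : Fin (2*n) → Fin (2*n)) (i : ℤ) : ℤ :=
  if h : (i % ((2*n : ℕ) : ℤ)).toNat < 2*n then
    let r : Fin (2*n) := ⟨(i % ((2*n : ℕ) : ℤ)).toNat, h⟩
    (i - i % ((2*n : ℕ) : ℤ)) +
      (if r < τ r then ((τ r : ℕ) : ℤ) else ((τ r : ℕ) : ℤ) + 2*n)
  else i

/-- `f_τ = g_τ − 1`. -/
def fTau (n : ℕ) (τ : Fin (2*n) → Fin (2*n)) (i : ℤ) : ℤ := gTau n τ i - 1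

/-- An electrical affine permutation for `n`. -/
def IsElectrical (n : ℕ) (f : ℤ → ℤ) : Prop :=
  IsAffinePerm (2*n) f ∧
  (∀ i : ℤ, i ≤ f i ∧ f i ≤ i + 2*n - 2) ∧
  windowSum (2*n) f = ((n:ℤ) - 1) * (2*n) ∧
  ∀ i : ℤ, (f (f i + 1) - (i - 1)) % ((2*n : ℕ) : ℤ) = 0

/-- The Grassmann necklace subset `I_a(f) ⊆ [m]`: representatives in `[m]` (0-based) of
`{f b mod m : b < a and f b ≥ a}`. -/
def necklaceI (m : ℕ) (f : ℤ → ℤ) (a : ℤ) : Finset (Fin m) :=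
  univ.filter fun x => ∃ b : ℤ, b < a ∧ a ≤ f b ∧ f b % (m:ℤ) = ((x:ℕ):ℤ)

/-- The dual necklace subset `J_a(f) ⊆ [m]`: representatives in `[m]` (0-based) of
`{b mod m : b < a and f b ≥ a}`. -/
def necklaceJ (m : ℕ) (f : ℤ → ℤ) (a : ℤ) : Finset (Fin m) :=
  univ.filter fun x => ∃ b : ℤ, b < a ∧ a ≤ f b ∧ b % (m:ℤ) = ((x:ℕ):ℤ)

/-- Dominance order on `k`-element subsets of `Fin m`:
the `r`-th smallest element of `I` is at most the `r`-th smallest element of `J`. -/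
def domLE {m : ℕ} (k : ℕ) (I J : Finset (Fin m)) : Prop :=
  ∃ (hI : I.card = k) (hJ : J.card = k),
    ∀ r : Fin k, I.orderEmbOfFin hI r ≤ J.orderEmbOfFin hJ r

/-- `a`-shifted dominance order: rotate so that `a` becomes least, then compare. -/
def sdomLE {m : ℕ} (k : ℕ) (a : Fin m) (I J : Finset (Fin m)) : Prop :=
  domLE k (I.image (· - a)) (J.image (· - a))

/-- `a`-shifted lexicographic order on subsets of `Fin m`. -/
def lexLE {m : ℕ} (a : Fin m) (I J : Finset (Fin m)) : Prop :=
  I = J ∨ List.Lex (· < ·) ((I.image (· - a)).sort (· ≤ ·)) ((J.image (· - a)).sort (· ≤ ·))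

/-- A Catalan subset of `[2n]` (0-based): an `(n−1)`-subset such that the length-`2n`
word with `U` at positions `{0} ∪ {x+1 : x ∈ I}` and `D` elsewhere is a Dyck path. -/
def IsCatalan {n : ℕ} (I : Finset (Fin (2*n))) : Prop :=
  I.card = n - 1 ∧
  ∀ p : ℕ, p ≤ 2*n →
    p ≤ 2 * ((insert 0 (I.image fun x => (x:ℕ)+1)).filter (· < p)).card

/-- Catalan subset with respect to the shifted order `≤_a`. -/
def IsCatalanAt {n : ℕ} (a : Fin (2*n)) (I : Finset (Fin (2*n))) : Prop :=
  IsCatalan (I.image (· - a))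

/-- The set of maxima of `S` with respect to the `a`-shifted order. -/
def maxAt {m : ℕ} (a : Fin m) (S : Finset (Fin m)) : Finset (Fin m) :=
  S.filter fun x => ∀ y ∈ S, y - a ≤ x - a

/-- `I_a(σ)` for a noncrossing partition `σ`: the complement in `[2n]` of the set of
`≤_a`-maxima of the blocks of `σ` (embedded by `bar`) and of the blocks of the dual
partition `σ̃` (embedded by `til`). -/
def IaP {n : ℕ} (σ : NCP n) (a : Fin (2*n)) : Finset (Fin (2*n)) :=
  univ \ ((σ.parts.biUnion fun B => maxAt a (B.image bar)) ∪
          ((univ : Finset (Fin n)).biUnion fun i =>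
            maxAt a ((univ.filter (dualRel σ i)).image til)))

/-- `I` is concordant with `σ`: `I` has `n−1` elements and every block of `σ` and of
its dual `σ̃` contains exactly one element of `[2n] ∖ I`. -/
def Concordant {n : ℕ} (σ : NCP n) (I : Finset (Fin (2*n))) : Prop :=
  I.card = n - 1 ∧
  (∀ B ∈ σ.parts, ((B.image bar) ∩ (univ \ I)).card = 1) ∧
  (∀ i : Fin n, (((univ.filter (dualRel σ i)).image til) ∩ (univ \ I)).card = 1)

/-- `E(I)`: the set of noncrossing partitions concordant with `I`. -/
def ESet {n : ℕ} (I : Finset (Fin (2*n))) : Set (NCP n) :=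
  {σ | IsNoncrossing σ ∧ Concordant σ I}

/-- The maximal minor `Δ_I(X)` on the columns indexed by `I`, in increasing order. -/
def minorOn {k m : ℕ} (X : Matrix (Fin k) (Fin m) ℝ) (I : Finset (Fin m)) : ℝ :=
  if h : I.card = k then (X.submatrix id fun r => I.orderEmbOfFin h r).det else 0

/-- `X` is totally nonnegative: it has full rank `k` and all maximal minors are `≥ 0`. -/
def IsTNN {k m : ℕ} (X : Matrix (Fin k) (Fin m) ℝ) : Prop :=
  X.rank = k ∧ ∀ I : Finset (Fin m), I.card = k → 0 ≤ minorOn X I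

/-- `t` times the matrix unit `E_{p,q}` (0-based indices). -/
def matE (m : ℕ) (p q : ℕ) (t : ℝ) : Matrix (Fin m) (Fin m) ℝ :=
  Matrix.of fun r s => if (r:ℕ) = p ∧ (s:ℕ) = q then t else 0

/-- `x_i(t) = Id + t·E_{i,i+1}` (1-based index `i`). -/
def xB (m i : ℕ) (t : ℝ) : Matrix (Fin m) (Fin m) ℝ := 1 + matE m (i-1) i t

/-- `y_i(t) = Id + t·E_{i+1,i}` (1-based index `i`). -/
def yB (m i : ℕ) (t : ℝ) : Matrix (Fin m) (Fin m) ℝ := 1 + matE m i (i-1) t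

/-- `u_i(t) = x_i(t)·y_{i−1}(t)` (1-based index `i`). -/
def uB (m i : ℕ) (t : ℝ) : Matrix (Fin m) (Fin m) ℝ := xB m i t * yB m (i-1) t

/-- The columns of `X`, extended `n`-periodically to all integer indices (0-based). -/
def colP {k n : ℕ} (X : Matrix (Fin k) (Fin n) ℝ) (i : ℤ) : Fin k → ℝ :=
  fun r => if h : (i % (n:ℤ)).toNat < n then X r ⟨(i % (n:ℤ)).toNat, h⟩ else 0

/-- `f_X(i) = min { j ≥ i : v_i ∈ span(v_{i+1}, …, v_j) }` (0-based columns). -/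
def fX {k n : ℕ} (X : Matrix (Fin k) (Fin n) ℝ) (i : ℤ) : ℤ :=
  sInf {j : ℤ | i ≤ j ∧ colP X i ∈ Submodule.span ℝ (colP X '' Set.Ioc i j)}

/-- Fintype instance for finite partitions of a finite set. -/
instance {α : Type*} [DecidableEq α] [Fintype α] (s : Finset α) : Fintype (Finpartition s) :=
  Fintype.ofInjective Finpartition.parts fun _ _ h => Finpartition.ext h

/-- The sorted list of (the values of) a subset of `Fin m`. -/
def sortedL {m : ℕ} (I : Finset (Fin m)) : List ℕ :=
  (I.sort (· ≤ ·)).map Fin.val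

/-- The number of inversions of a list (= the number of adjacent transpositions
needed to sort it, when entries are distinct). -/
def invNum (l : List ℕ) : ℕ :=
  ((Finset.range l.length ×ˢ Finset.range l.length).filter fun pq =>
    pq.1 < pq.2 ∧ l.getD pq.2 0 < l.getD pq.1 0).card

/-- The subset of `Fin m` whose values lie in the list `l`. -/
def toFinF {m : ℕ} (l : List ℕ) : Finset (Fin m) :=
  univ.filter fun x => (x:ℕ) ∈ l

/-- The double sum `Σ_{σ ∈ E(l), κ ∈ E(l')} L σ · L κ`, where `E` of a list with a
repeated entry (or an out-of-range entry) is empty. -/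
def pairSum {n : ℕ} (L : NCP n → ℝ) (l l' : List ℕ) : ℝ :=
  if (l.Nodup ∧ ∀ x ∈ l, x < 2*n) ∧ (l'.Nodup ∧ ∀ x ∈ l', x < 2*n) then
    ∑ᶠ σ ∈ ESet (n := n) (toFinF l), ∑ᶠ κ ∈ ESet (n := n) (toFinF l'), L σ * L κ
  else 0

/-- The list obtained from `LI` by replacing its entries at the positions in `S`
(in increasing order of position) by the first `#S` entries of `LJ`. -/
def swapI (LI LJ : List ℕ) (S : Finset ℕ) : List ℕ :=
  (List.range LI.length).map fun p =>
    if p ∈ S then LJ.getD ((S.filter (· < p)).card) 0 else LI.getD p 0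

/-- The list obtained from `LJ` by replacing its first `#S` entries by the entries of
`LI` at the positions in `S`, in increasing order. -/
def swapJ (LI LJ : List ℕ) (S : Finset ℕ) : List ℕ :=
  (List.range LJ.length).map fun p =>
    if p < S.card then LI.getD ((S.sort (· ≤ ·)).getD p 0) 0 else LJ.getD p 0

/-!
Write `K = Iᶜ`. The complement of `I_a(σ)` consists of one maximum per block, so an initial segment
of `≤_a` contains as many of these maxima as it contains whole blocks. Hence `I_a(σ) ≤_a I` holds
for all `a` if and only if `K` has as many points as there are blocks and every arc of the circle
contains at least as many points of `K` as whole blocks. A transversal of the blocks has this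
property. Conversely, the blocks of `σ` and `σ̃` together form a noncrossing partition of the
circle, so every block other than `B` lies in one of the arcs cut out by `B`. Summing over these
arcs, `K` has at least as many points outside `B` as there are other blocks, hence at most one point
in `B`; as `K` has as many points as there are blocks, it meets each block exactly once.
-/

section DominanceOrder

variable {α : Type*} [LinearOrder α] {k : ℕ}

theorem orderEmbOfFin_lt_iff_lt_card_filter_lt {s : Finset α} (hs : #s = k) (r : Fin k) (x : α) :
    s.orderEmbOfFin hs r < x ↔ r < #{y ∈ s | y < x} := by
  constructor
  · intro hr
    rw [← Nat.succ_le_iff, Nat.succ_eq_add_one, ← Fin.card_Iic,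
      ← card_map (s.orderEmbOfFin hs).toEmbedding]
    refine card_le_card fun y hy => ?_
    obtain ⟨i, hi, rfl⟩ := mem_map.1 hy
    exact mem_filter.2 ⟨s.orderEmbOfFin_mem hs i,
      ((s.orderEmbOfFin hs).monotone (mem_Iic.1 hi)).trans_lt hr⟩
  · contrapose!
    intro hr
    rw [← Fin.card_Iio, ← card_map (s.orderEmbOfFin hs).toEmbedding]
    refine card_le_card fun y hy => ?_
    obtain ⟨hys, hyx⟩ := mem_filter.1 hy
    rw [← image_orderEmbOfFin_univ s hs] at hys
    obtain ⟨i, -, rfl⟩ := mem_image.1 hys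
    exact mem_map_of_mem _ (mem_Iio.2 ((s.orderEmbOfFin hs).lt_iff_lt.1 (hyx.trans_le hr)))

theorem forall_orderEmbOfFin_le_iff_card_filter_lt_le {s t : Finset α} (hs : #s = k)
    (ht : #t = k) :
    (∀ r, s.orderEmbOfFin hs r ≤ t.orderEmbOfFin ht r) ↔
      ∀ x, #{y ∈ t | y < x} ≤ #{y ∈ s | y < x} := by
  constructor
  · intro h x
    by_contra! hlt
    let r : Fin k := ⟨_, hlt.trans_le ((card_filter_le _ _).trans ht.le)⟩
    have hr : t.orderEmbOfFin ht r < x := (orderEmbOfFin_lt_iff_lt_card_filter_lt ht r x).2 hlt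
    exact lt_irrefl (r : ℕ)
      ((orderEmbOfFin_lt_iff_lt_card_filter_lt hs r x).1 ((h r).trans_lt hr))
  · intro h r
    by_contra! hlt
    rw [orderEmbOfFin_lt_iff_lt_card_filter_lt] at hlt
    exact lt_irrefl _ ((orderEmbOfFin_lt_iff_lt_card_filter_lt hs r _).2 (hlt.trans_le (h _)))

theorem sdomLE_iff_card_filter_sub_lt_le {m : ℕ} (a : Fin m) (I J : Finset (Fin m)) :
    sdomLE k a I J ↔
      #I = k ∧ #J = k ∧ ∀ t, #{x ∈ J | x - a < t} ≤ #{x ∈ I | x - a < t} := by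
  have : NeZero m := NeZero.of_pos a.pos
  have hinj : Function.Injective (· - a) := sub_left_injective
  simp only [sdomLE, domLE, forall_orderEmbOfFin_le_iff_card_filter_lt_le, filter_image,
    card_image_of_injective _ hinj, exists_prop]

theorem card_filter_compl_le_card_filter_compl_iff {β : Type*} [Fintype β] [DecidableEq β]
    (s t : Finset β) (p : β → Prop) [DecidablePred p] :
    #{x ∈ sᶜ | p x} ≤ #{x ∈ tᶜ | p x} ↔ #{x ∈ t | p x} ≤ #{x ∈ s | p x} := by
  have hcompl (u : Finset β) : #{x ∈ u | p x} + #{x ∈ uᶜ | p x} = #{x | p x} := by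
    rw [← card_union_of_disjoint (disjoint_filter_filter disjoint_compl_right), ← filter_union,
      union_compl]
  have hs := hcompl s
  have ht := hcompl t
  lia

end DominanceOrder

section Transversal

variable {α : Type*} [DecidableEq α]

/-- `K` is a transversal of the partition `P`: it meets every part in exactly one point. -/
def IsTransversal {s : Finset α} (P : Finpartition s) (K : Finset α) : Prop :=
  ∀ B ∈ P.parts, #(B ∩ K) = 1

theorem sum_card_parts_inter {s : Finset α} (P : Finpartition s) (K : Finset α) :
    ∑ B ∈ P.parts, #(B ∩ K) = #(s ∩ K) := by
  have hdisj : (P.parts : Set (Finset α)).PairwiseDisjoint (· ∩ K) :=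
    P.disjoint.mono fun _ => inter_subset_left
  rw [← card_biUnion hdisj, ← biUnion_inter]
  congr 2
  exact P.biUnion_parts

variable [Fintype α] {P : Finpartition (univ : Finset α)} {K : Finset α}

theorem IsTransversal.card_eq_card_parts (hK : IsTransversal P K) : #K = #P.parts := by
  rw [← univ_inter K, ← sum_card_parts_inter P, sum_congr rfl hK, card_eq_sum_ones]

theorem IsTransversal.card_filter_parts_le (hK : IsTransversal P K) (p : α → Prop)
    [DecidablePred p] [DecidablePred fun B : Finset α => ∀ x ∈ B, p x] :
    #{B ∈ P.parts | ∀ x ∈ B, p x} ≤ #{x ∈ K | p x} := by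
  rw [← univ_inter (filter p K), ← sum_card_parts_inter P, card_filter]
  refine sum_le_sum fun B hB => ?_
  split_ifs with hp
  · rw [← hK B hB]
    refine card_le_card fun x hx => ?_
    obtain ⟨hxB, hxK⟩ := mem_inter.1 hx
    exact mem_inter.2 ⟨hxB, mem_filter.2 ⟨hxK, hp x hxB⟩⟩
  · exact Nat.zero_le _

theorem isTransversal_of_card_inter_le_one (hK : #K = #P.parts)
    (h : ∀ B ∈ P.parts, #(B ∩ K) ≤ 1) : IsTransversal P K := by
  refine (sum_eq_sum_iff_of_le h).1 ?_
  rw [sum_card_parts_inter, univ_inter, hK, card_eq_sum_ones]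

end Transversal

section ShiftedMaxima

variable {m : ℕ} (a : Fin m)

theorem exists_maxAt_eq_singleton {S : Finset (Fin m)} (hS : S.Nonempty) :
    ∃ x ∈ S, maxAt a S = {x} ∧ ∀ y ∈ S, y - a ≤ x - a := by
  have : NeZero m := NeZero.of_pos a.pos
  obtain ⟨x, hx, hmax⟩ := exists_max_image S (· - a) hS
  refine ⟨x, hx, ?_, hmax⟩
  ext y
  rw [maxAt, mem_filter, mem_singleton]
  constructor
  · rintro ⟨hy, hymax⟩
    exact sub_left_injective (le_antisymm (hmax y hy) (hymax x hx))
  · rintro rfl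
    exact ⟨hx, hmax⟩

variable {s : Finset (Fin m)} (P : Finpartition s)

theorem pairwiseDisjoint_maxAt : (P.parts : Set (Finset (Fin m))).PairwiseDisjoint (maxAt a) :=
  P.disjoint.mono fun _ => filter_subset _ _

theorem card_biUnion_maxAt : #(P.parts.biUnion (maxAt a)) = #P.parts := by
  rw [card_biUnion (pairwiseDisjoint_maxAt a P), card_eq_sum_ones]
  refine sum_congr rfl fun B hB => ?_
  obtain ⟨x, -, hx, -⟩ := exists_maxAt_eq_singleton a (P.nonempty_of_mem_parts hB)
  rw [hx, card_singleton]

theorem card_filter_sub_lt_biUnion_maxAt (t : Fin m) :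
    #{x ∈ P.parts.biUnion (maxAt a) | x - a < t} = #{B ∈ P.parts | ∀ x ∈ B, x - a < t} := by
  rw [filter_biUnion, card_biUnion, card_filter]
  · refine sum_congr rfl fun B hB => ?_
    obtain ⟨x, hxB, hx, hmax⟩ := exists_maxAt_eq_singleton a (P.nonempty_of_mem_parts hB)
    have hiff : (∀ y ∈ B, y - a < t) ↔ x - a < t :=
      ⟨fun h => h x hxB, fun h y hy => (hmax y hy).trans_lt h⟩
    rw [hx, filter_singleton, apply_ite card, card_singleton, card_empty]
    simp only [hiff]
  · exact (pairwiseDisjoint_maxAt a P).mono fun _ => filter_subset _ _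

end ShiftedMaxima

section CircularOrder

variable {α : Type*} [CircularOrder α]

theorem sbtw_or_sbtw_of_ne {a b c : α} (hab : a ≠ b) (hbc : b ≠ c) (hca : c ≠ a) :
    sbtw a b c ∨ sbtw c b a := by
  by_contra! h
  rw [← btw_iff_not_sbtw, ← btw_iff_not_sbtw] at h
  rcases h.1.antisymm h.2 with h | h | h
  exacts [hbc h.symm, hab h.symm, hca h.symm]

/-- The chords `ac` and `bd` of a circle cross, with `a`, `b`, `c`, `d` in clockwise order. -/
def ChordsCross (a c b d : α) : Prop := sbtw a b c ∧ sbtw c d a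

theorem ChordsCross.rotate {a b c d : α} (h : ChordsCross a c b d) : ChordsCross b d c a :=
  ⟨(h.2.trans_right h.1.cyclic_right).cyclic_right,
    (h.1.trans_right h.2.cyclic_right).cyclic_right⟩

theorem ChordsCross.left_or_right {p q r x y : α} (h : ChordsCross p r x y) (hxq : x ≠ q)
    (hyq : y ≠ q) : ChordsCross p q x y ∨ ChordsCross q r x y := by
  have hxy : y ≠ x := by
    rintro rfl
    exact h.1.not_sbtw h.2
  rcases sbtw_or_sbtw_of_ne hxq hyq.symm hxy with hq | hq
  · have hpq : ChordsCross x y q p := ⟨hq, h.rotate.2⟩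
    exact Or.inl hpq.rotate.rotate.rotate
  · have hqr : ChordsCross x y r q := ⟨h.rotate.1, hq⟩
    exact Or.inr hqr.rotate.rotate.rotate

/-- For `b ∈ B`, the open clockwise arc from `b` to the next point of `B`; it is the whole circle
without `b` if `B = {b}`. -/
def arcAfter (B : Finset α) (b : α) : Set α := {x | x ∉ B ∧ ∀ c ∈ B, ¬ sbtw b c x}

theorem exists_mem_arcAfter {B : Finset α} (hB : B.Nonempty) {x : α} (hx : x ∉ B) :
    ∃ b ∈ B, x ∈ arcAfter B b := by
  suffices h : ∃ b ∈ B, ∀ c ∈ B, ¬ sbtw b c x by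
    obtain ⟨b, hb, hbx⟩ := h
    exact ⟨b, hb, hx, hbx⟩
  clear hx
  induction hB using Finset.Nonempty.cons_induction with
  | singleton b => exact ⟨b, mem_singleton_self b, by simpa using sbtw_irrefl_left⟩
  | cons d B hd _ ih =>
    obtain ⟨b, hb, hbx⟩ := ih
    simp only [mem_cons, forall_eq_or_imp, exists_eq_or_imp]
    by_cases hbd : sbtw b d x
    · exact Or.inl ⟨sbtw_irrefl_left, fun c hc hdc => hbx c hc (hbd.trans_left hdc)⟩
    · exact Or.inr ⟨b, hb, hbd, hbx⟩

theorem pairwiseDisjoint_arcAfter (B : Finset α) :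
    (B : Set α).PairwiseDisjoint (arcAfter B) := by
  intro b hb c hc hbc
  rw [Function.onFun, Set.disjoint_left]
  rintro x ⟨hxB, hxb⟩ ⟨-, hxc⟩
  rcases sbtw_or_sbtw_of_ne hbc (ne_of_mem_of_not_mem hc hxB)
    (ne_of_mem_of_not_mem hb hxB).symm with h | h
  · exact hxb c hc h
  · exact hxc b hb h.cyclic_left

variable [DecidableEq α]

theorem sum_card_filter_arcAfter_le (B K : Finset α) :
    ∑ b ∈ B, #{x ∈ K | x ∈ arcAfter B b} ≤ #(K \ B) := by
  rw [← card_biUnion]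
  · refine card_le_card (biUnion_subset.2 fun b _ x hx => ?_)
    obtain ⟨hxK, hxB, -⟩ := mem_filter.1 hx
    exact mem_sdiff.2 ⟨hxK, hxB⟩
  · intro b hb c hc hbc
    exact disjoint_filter.2 fun x _ hx =>
      Set.disjoint_left.1 (pairwiseDisjoint_arcAfter B hb hc hbc) hx

/-- The partition `P` of a set of points on a circle is noncrossing: chords joining points of
distinct parts do not cross. -/
def Noncrossing {s : Finset α} (P : Finpartition s) : Prop :=
  ∀ B ∈ P.parts, ∀ C ∈ P.parts, ∀ a ∈ B, ∀ c ∈ B, ∀ b ∈ C, ∀ d ∈ C,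
    ChordsCross a c b d → B = C

theorem Noncrossing.exists_forall_mem_arcAfter {s : Finset α} {P : Finpartition s}
    (hP : Noncrossing P) {B C : Finset α} (hB : B ∈ P.parts) (hC : C ∈ P.parts) (hBC : B ≠ C) :
    ∃ b ∈ B, ∀ y ∈ C, y ∈ arcAfter B b := by
  have hdisj : Disjoint C B := P.disjoint hC hB hBC.symm
  obtain ⟨x, hx⟩ := P.nonempty_of_mem_parts hC
  have hxB : x ∉ B := disjoint_left.1 hdisj hx
  obtain ⟨b, hb, -, hbx⟩ := exists_mem_arcAfter (P.nonempty_of_mem_parts hB) hxB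
  refine ⟨b, hb, fun y hy => ⟨disjoint_left.1 hdisj hy, fun c hc hbcy => ?_⟩⟩
  have hbc : b ≠ c := by
    rintro rfl
    exact sbtw_irrefl_left hbcy
  have hxcb : sbtw x c b := (sbtw_or_sbtw_of_ne hbc (ne_of_mem_of_not_mem hc hxB)
    (ne_of_mem_of_not_mem hb hxB).symm).resolve_left (hbx c hc)
  exact hBC (hP B hB C hC b hb c hc x hx y hy ⟨hxcb.cyclic_right, hbcy.cyclic_left⟩)

variable [Fintype α] {P : Finpartition (univ : Finset α)} {K : Finset α}

theorem Noncrossing.isTransversal_of_card_filter_arcAfter_le (hP : Noncrossing P)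
    (hK : #K = #P.parts)
    (harc : ∀ B ∈ P.parts, ∀ b ∈ B,
      #{C ∈ P.parts | ∀ x ∈ C, x ∈ arcAfter B b} ≤ #{x ∈ K | x ∈ arcAfter B b}) :
    IsTransversal P K := by
  refine isTransversal_of_card_inter_le_one hK fun B hB => ?_
  have hcover : P.parts.erase B ⊆
      B.biUnion fun b => {C ∈ P.parts | ∀ x ∈ C, x ∈ arcAfter B b} := by
    intro C hC
    obtain ⟨hne, hC⟩ := mem_erase.1 hC
    obtain ⟨b, hb, hCb⟩ := hP.exists_forall_mem_arcAfter hB hC hne.symm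
    exact mem_biUnion.2 ⟨b, hb, mem_filter.2 ⟨hC, hCb⟩⟩
  have hsdiff : #P.parts - 1 ≤ #(K \ B) :=
    calc
      #P.parts - 1 = #(P.parts.erase B) := (card_erase_of_mem hB).symm
      _ ≤ ∑ b ∈ B, #{C ∈ P.parts | ∀ x ∈ C, x ∈ arcAfter B b} :=
        (card_le_card hcover).trans card_biUnion_le
      _ ≤ ∑ b ∈ B, #{x ∈ K | x ∈ arcAfter B b} := sum_le_sum (harc B hB)
      _ ≤ #(K \ B) := sum_card_filter_arcAfter_le B K
  have hadd : #(B ∩ K) + #(K \ B) = #K := by rw [inter_comm, card_inter_add_card_sdiff]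
  lia

end CircularOrder

section FinCircle

variable {m : ℕ}

theorem chordsCross_iff_cyclicOrder4 {a b c d : Fin m} :
    ChordsCross a c b d ↔ CyclicOrder4 a b c d := by
  simp only [ChordsCross, CyclicOrder4, Fin.sbtw_iff]
  omega

theorem sub_add_one_lt_sub_add_one_iff [NeZero m] (b c x : Fin m) :
    x - (b + 1) < c - (b + 1) ↔ x ≠ c ∧ x ≠ b ∧ ¬ sbtw b c x := by
  have hb : (b + 1).val = if b.val + 1 = m then 0 else b.val + 1 := by
    obtain ⟨k, rfl⟩ := Nat.exists_eq_succ_of_ne_zero (NeZero.ne m)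
    rw [Fin.val_add_one]
    simp [Fin.ext_iff]
  generalize b + 1 = b' at hb ⊢
  rw [Fin.sbtw_iff]
  split_ifs at hb <;> fin_omega

theorem exists_mem_arcAfter_iff_sub_lt {B : Finset (Fin m)} {b : Fin m} (hb : b ∈ B) :
    ∃ a t, ∀ x, x ∈ arcAfter B b ↔ x - a < t := by
  have : NeZero m := NeZero.of_pos b.pos
  obtain ⟨c, hc, hmin⟩ := exists_min_image B (· - (b + 1)) ⟨b, hb⟩
  -- In the order that starts just after `b`, the arc ends at the least point `c` of `B`.
  refine ⟨b + 1, c - (b + 1), fun x => ?_⟩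
  calc
    x ∈ arcAfter B b ↔ ∀ d ∈ B, x - (b + 1) < d - (b + 1) := by
      simp only [sub_add_one_lt_sub_add_one_iff]
      exact ⟨fun ⟨hxB, hx⟩ d hd =>
          ⟨(ne_of_mem_of_not_mem hd hxB).symm, (ne_of_mem_of_not_mem hb hxB).symm, hx d hd⟩,
        fun h => ⟨fun hxB => (h x hxB).1 rfl, fun d hd => (h d hd).2.2⟩⟩
    _ ↔ x - (b + 1) < c - (b + 1) :=
      ⟨fun h => h c hc, fun h d hd => h.trans_le (hmin d hd)⟩

variable {P : Finpartition (univ : Finset (Fin m))}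

theorem Noncrossing.isTransversal_iff_card_filter_sub_lt_le (hP : Noncrossing P)
    (K : Finset (Fin m)) :
    IsTransversal P K ↔ #K = #P.parts ∧
      ∀ a t : Fin m, #{B ∈ P.parts | ∀ x ∈ B, x - a < t} ≤ #{x ∈ K | x - a < t} := by
  refine ⟨fun hK => ⟨hK.card_eq_card_parts, fun a t => hK.card_filter_parts_le (· - a < t)⟩, ?_⟩
  rintro ⟨hK, hinit⟩
  refine hP.isTransversal_of_card_filter_arcAfter_le hK fun B _ b hb => ?_
  obtain ⟨a, t, hat⟩ := exists_mem_arcAfter_iff_sub_lt hb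
  simpa only [hat] using hinit a t

theorem Noncrossing.isTransversal_compl_iff_forall_sdomLE (hP : Noncrossing P) {k : ℕ}
    {I : Finset (Fin m)} (hI : #I = k) :
    IsTransversal P Iᶜ ↔ ∀ a, sdomLE k a (P.parts.biUnion (maxAt a))ᶜ I := by
  have hsdom (a : Fin m) : sdomLE k a (P.parts.biUnion (maxAt a))ᶜ I ↔ #Iᶜ = #P.parts ∧
      ∀ t, #{B ∈ P.parts | ∀ x ∈ B, x - a < t} ≤ #{x ∈ Iᶜ | x - a < t} := by
    have hcard : #(P.parts.biUnion (maxAt a))ᶜ = k ↔ #Iᶜ = #P.parts := by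
      have hM := card_compl_add_card (P.parts.biUnion (maxAt a))
      have hIc := card_compl_add_card I
      rw [card_biUnion_maxAt] at hM
      lia
    have hcount (t : Fin m) := card_filter_compl_le_card_filter_compl_iff Iᶜ
      (P.parts.biUnion (maxAt a)) (· - a < t)
    simp only [compl_compl, card_filter_sub_lt_biUnion_maxAt] at hcount
    simp only [sdomLE_iff_card_filter_sub_lt_le, hcard, hI, true_and, hcount]
  rw [hP.isTransversal_iff_card_filter_sub_lt_le]
  simp only [hsdom, forall_and]
  refine and_congr_left' ⟨fun h _ => h, fun h => ?_⟩
  rcases isEmpty_or_nonempty (Fin m) with hm | ⟨⟨a⟩⟩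
  · have hparts : #P.parts ≤ 0 := P.card_parts_le_card.trans_eq Fintype.card_eq_zero
    rw [eq_empty_of_isEmpty Iᶜ, card_empty, Nat.le_zero.1 hparts]
  · exact h a

end FinCircle

section NoncrossingPartition

variable {n : ℕ} {σ : NCP n}

theorem sameBlock.symm {i j : Fin n} : sameBlock σ i j → sameBlock σ j i :=
  fun ⟨B, hB, hi, hj⟩ => ⟨B, hB, hj, hi⟩

theorem eq_of_sameBlock {B C : Finset (Fin n)} (hB : B ∈ σ.parts) (hC : C ∈ σ.parts) {i j : Fin n}
    (hi : i ∈ B) (hj : j ∈ C) (hij : sameBlock σ i j) : B = C := by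
  obtain ⟨D, hD, hiD, hjD⟩ := hij
  rw [σ.eq_of_mem_parts hB hD hi hiD, σ.eq_of_mem_parts hC hD hj hjD]

theorem noncrossing_of_isNoncrossing (hσ : IsNoncrossing σ) : Noncrossing σ := by
  intro B hB C hC a ha c hc b hb d hd hcross
  have hac : sameBlock σ a c := ⟨B, hB, ha, hc⟩
  have hbd : sameBlock σ b d := ⟨C, hC, hb, hd⟩
  rcases chordsCross_iff_cyclicOrder4.1 hcross with
    ⟨h₁, h₂, h₃⟩ | ⟨h₁, h₂, h₃⟩ | ⟨h₁, h₂, h₃⟩ | ⟨h₁, h₂, h₃⟩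
  · exact eq_of_sameBlock hB hC ha hb (hσ a b c d h₁ h₂ h₃ hac hbd)
  · exact (eq_of_sameBlock hC hB hb hc (hσ b c d a h₁ h₂ h₃ hbd hac.symm)).symm
  · exact eq_of_sameBlock hB hC hc hd (hσ c d a b h₁ h₂ h₃ hac.symm hbd.symm)
  · exact (eq_of_sameBlock hC hB hd ha (hσ d a b c h₁ h₂ h₃ hbd.symm hac)).symm

end NoncrossingPartition

section ImageUnion

variable {α β γ : Type*} [DecidableEq α] [DecidableEq β] [DecidableEq γ]

theorem biUnion_parts_image {s : Finset β} (P : Finpartition s) (f : β → α) :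
    P.parts.biUnion (image f) = s.image f :=
  biUnion_image.symm.trans (congr_arg (image f) P.biUnion_parts)

variable [Fintype α] [Fintype β] [Fintype γ]

/-- The partition of `α` formed by the images of the parts of `P` under `f` and those of the parts
of `Q` under `g`, where `α` is the disjoint union of the ranges of the injections `f` and `g`. -/
def imageUnion {f : β → α} {g : γ → α} (hf : Function.Injective f) (hg : Function.Injective g)
    (hfg : IsCompl (Set.range f) (Set.range g)) (P : Finpartition (univ : Finset β))
    (Q : Finpartition (univ : Finset γ)) : Finpartition (univ : Finset α) where
  parts := P.parts.image (image f) ∪ Q.parts.image (image g)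
  supIndep := by
    rw [supIndep_iff_pairwiseDisjoint, coe_union, Set.pairwiseDisjoint_union]
    simp only [coe_image]
    refine ⟨?_, ?_, ?_⟩
    · rintro _ ⟨B, hB, rfl⟩ _ ⟨C, hC, rfl⟩ hBC
      exact (disjoint_image hf).2 (P.disjoint hB hC (ne_of_apply_ne _ hBC))
    · rintro _ ⟨B, hB, rfl⟩ _ ⟨C, hC, rfl⟩ hBC
      exact (disjoint_image hg).2 (Q.disjoint hB hC (ne_of_apply_ne _ hBC))
    · rintro _ ⟨B, -, rfl⟩ _ ⟨C, -, rfl⟩ -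
      rw [id, id, ← disjoint_coe, coe_image, coe_image]
      exact hfg.disjoint.mono (Set.image_subset_range _ _) (Set.image_subset_range _ _)
  sup_parts := by
    rw [sup_eq_biUnion, union_biUnion, image_biUnion, image_biUnion]
    simp only [id, biUnion_parts_image]
    rw [← coe_inj]
    push_cast
    simp only [Set.image_univ]
    exact hfg.sup_eq_top
  bot_notMem := by
    simp only [bot_eq_empty, mem_union, mem_image, image_eq_empty, exists_eq_right, not_or]
    exact ⟨P.empty_notMem_parts, Q.empty_notMem_parts⟩

theorem parts_imageUnion {f : β → α} {g : γ → α} (hf : Function.Injective f)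
    (hg : Function.Injective g) (hfg : IsCompl (Set.range f) (Set.range g))
    (P : Finpartition (univ : Finset β)) (Q : Finpartition (univ : Finset γ)) :
    (imageUnion hf hg hfg P Q).parts = P.parts.image (image f) ∪ Q.parts.image (image g) :=
  rfl

end ImageUnion

section DualPartition

variable {n : ℕ} {σ : NCP n}

theorem bar_injective : Function.Injective (bar (n := n)) := fun i j h => by
  simpa [bar, Fin.ext_iff] using h

theorem til_injective : Function.Injective (til (n := n)) := fun i j h => by
  simpa [til, Fin.ext_iff] using h

theorem bar_ne_til (i j : Fin n) : bar i ≠ til j := fun h => by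
  simp only [bar, til, Fin.mk.injEq] at h
  omega

theorem isCompl_range_bar_range_til : IsCompl (Set.range (bar (n := n))) (Set.range til) := by
  refine ⟨Set.disjoint_left.2 ?_, codisjoint_iff_le_sup.2 fun x _ => ?_⟩
  · rintro _ ⟨i, rfl⟩ ⟨j, h⟩
    exact bar_ne_til i j h.symm
  · rcases Nat.even_or_odd' x with ⟨k, hk | hk⟩
    · exact Or.inl ⟨⟨k, by omega⟩, Fin.ext hk.symm⟩
    · exact Or.inr ⟨⟨k, by omega⟩, Fin.ext hk.symm⟩

theorem sbtw_bar_iff {i j k : Fin n} : sbtw (bar i) (bar j) (bar k) ↔ sbtw i j k := by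
  simp only [Fin.sbtw_iff, bar, Fin.lt_def]
  omega

theorem sbtw_til_iff {i j k : Fin n} : sbtw (til i) (til j) (til k) ↔ sbtw i j k := by
  simp only [Fin.sbtw_iff, til, Fin.lt_def]
  omega

theorem mem_cIoc_iff_sbtw {i j x : Fin n} (hij : i ≠ j) :
    x ∈ cIoc i j ↔ sbtw (til i) (bar x) (til j) := by
  simp only [cIoc, mem_filter, mem_univ, true_and, Fin.sbtw_iff, til, bar, Fin.lt_def, Fin.le_def]
  split_ifs <;> omega

theorem dualRel_iff_not_chordsCross {i j : Fin n} :
    dualRel σ i j ↔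
      ∀ B ∈ σ.parts, ∀ x ∈ B, ∀ y ∈ B, ¬ ChordsCross (til i) (til j) (bar x) (bar y) := by
  rcases eq_or_ne i j with rfl | hij
  · simp only [dualRel, true_or, true_iff]
    exact fun _ _ _ _ _ _ h => sbtw_irrefl_left_right h.1
  · simp only [dualRel, hij, false_or, Finset.Nonempty, mem_inter, mem_cIoc_iff_sbtw hij,
      mem_cIoc_iff_sbtw hij.symm, ChordsCross]
    grind

variable (σ) in
theorem dualRel_equivalence : Equivalence (dualRel σ) := by
  refine ⟨fun i => Or.inl rfl, fun {i j} hij => ?_, fun {i j k} hij hjk => ?_⟩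
  · rw [dualRel_iff_not_chordsCross] at hij ⊢
    exact fun B hB x hx y hy hxy => hij B hB y hy x hx hxy.rotate.rotate
  · rw [dualRel_iff_not_chordsCross] at hij hjk ⊢
    intro B hB x hx y hy hik
    rcases hik.left_or_right (bar_ne_til x j) (bar_ne_til y j) with h | h
    exacts [hij B hB x hx y hy h, hjk B hB x hx y hy h]

variable (σ) in
/-- The dual (Kreweras complement) partition `σ̃`, whose blocks are the classes of `dualRel σ`. -/
def dualPartition : NCP n := Finpartition.ofSetoid ⟨dualRel σ, dualRel_equivalence σ⟩

theorem parts_dualPartition :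
    (dualPartition σ).parts = univ.image fun i => univ.filter (dualRel σ i) :=
  rfl

theorem sameBlock_dualPartition_iff {i j : Fin n} :
    sameBlock (dualPartition σ) i j ↔ dualRel σ i j := by
  refine Iff.trans ?_ (Finpartition.mem_part_ofSetoid_iff_rel (s := ⟨_, dualRel_equivalence σ⟩))
  simp only [Finpartition.mem_part_iff_exists, sameBlock, dualPartition, and_comm]

theorem dualRel.of_chordsCross {i j k l : Fin n} (hik : dualRel σ i k) (hjl : dualRel σ j l)
    (h : ChordsCross i k j l) : dualRel σ i j := by
  rw [dualRel_iff_not_chordsCross] at hik hjl ⊢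
  intro B hB x hx y hy hij
  have hkj : ChordsCross (til k) (til j) (bar x) (bar y) :=
    (hij.left_or_right (bar_ne_til x k) (bar_ne_til y k)).resolve_left (hik B hB x hx y hy)
  have hil : ChordsCross (til i) (til l) (bar x) (bar y) :=
    (hij.left_or_right (bar_ne_til x l) (bar_ne_til y l)).resolve_right
      fun hlj => hjl B hB y hy x hx hlj.rotate.rotate
  have hjyl : sbtw (til j) (bar y) (til l) := hkj.2.trans_right (sbtw_til_iff.2 h.rotate.1)
  have hlyj : sbtw (til l) (bar y) (til j) := hil.2.trans_right (sbtw_til_iff.2 h.rotate.2)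
  exact hjyl.not_sbtw hlyj

theorem noncrossing_dualPartition : Noncrossing (dualPartition σ) := by
  intro B hB C hC i hi k hk j hj l hl h
  have hik : dualRel σ i k := sameBlock_dualPartition_iff.1 ⟨B, hB, hi, hk⟩
  have hjl : dualRel σ j l := sameBlock_dualPartition_iff.1 ⟨C, hC, hj, hl⟩
  exact eq_of_sameBlock hB hC hi hj (sameBlock_dualPartition_iff.2 (hik.of_chordsCross hjl h))

end DualPartition

section UnionDual

variable {n : ℕ} (σ : NCP n)

/-- The partition of `[2n]` formed by the blocks of `σ`, placed on the points `ī`, and the blocks of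
its dual `σ̃`, placed on the points `ĩ`. -/
def unionDual : Finpartition (univ : Finset (Fin (2 * n))) :=
  imageUnion bar_injective til_injective isCompl_range_bar_range_til σ (dualPartition σ)

theorem parts_unionDual : (unionDual σ).parts = σ.parts.image (image bar) ∪
    univ.image fun i => (univ.filter (dualRel σ i)).image til := by
  rw [unionDual, parts_imageUnion, parts_dualPartition, image_image]
  rfl

theorem IaP_eq_compl_biUnion_maxAt (a : Fin (2 * n)) :
    IaP σ a = ((unionDual σ).parts.biUnion (maxAt a))ᶜ := by
  rw [IaP, parts_unionDual, union_biUnion, image_biUnion, image_biUnion, compl_eq_univ_sdiff]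

variable {σ}

theorem concordant_iff_isTransversal {I : Finset (Fin (2 * n))} (hI : #I = n - 1) :
    Concordant σ I ↔ IsTransversal (unionDual σ) Iᶜ := by
  simp only [Concordant, hI, true_and, IsTransversal, parts_unionDual, compl_eq_univ_sdiff,
    forall_mem_union, forall_mem_image, mem_univ, forall_const]

theorem noncrossing_unionDual (hσ : IsNoncrossing σ) : Noncrossing (unionDual σ) := by
  intro B hB C hC a ha c hc b hb d hd hcross
  rw [unionDual, parts_imageUnion, mem_union, mem_image, mem_image] at hB hC
  rcases hB with ⟨B, hB, rfl⟩ | ⟨B, hB, rfl⟩ <;> rcases hC with ⟨C, hC, rfl⟩ | ⟨C, hC, rfl⟩ <;>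
    obtain ⟨i, hi, rfl⟩ := mem_image.1 ha <;> obtain ⟨k, hk, rfl⟩ := mem_image.1 hc <;>
    obtain ⟨j, hj, rfl⟩ := mem_image.1 hb <;> obtain ⟨l, hl, rfl⟩ := mem_image.1 hd
  · rw [ChordsCross, sbtw_bar_iff, sbtw_bar_iff] at hcross
    rw [noncrossing_of_isNoncrossing hσ B hB C hC i hi k hk j hj l hl hcross]
  · have hjl : dualRel σ j l := sameBlock_dualPartition_iff.1 ⟨C, hC, hj, hl⟩
    exact absurd hcross.rotate (dualRel_iff_not_chordsCross.1 hjl B hB k hk i hi)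
  · have hik : dualRel σ i k := sameBlock_dualPartition_iff.1 ⟨B, hB, hi, hk⟩
    exact absurd hcross (dualRel_iff_not_chordsCross.1 hik C hC j hj l hl)
  · rw [ChordsCross, sbtw_til_iff, sbtw_til_iff] at hcross
    rw [noncrossing_dualPartition B hB C hC i hi k hk j hj l hl hcross]

end UnionDual

theorem stmt15 (n : ℕ) (σ : NCP n) (hσ : IsNoncrossing σ)
    (I : Finset (Fin (2*n))) (hI : I.card = n - 1) :
    Concordant σ I ↔ ∀ a : Fin (2*n), sdomLE (n-1) a (IaP σ a) I := by
  simp only [concordant_iff_isTransversal hI, IaP_eq_compl_biUnion_maxAt]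
  exact (noncrossing_unionDual hσ).isTransversal_compl_iff_forall_sdomLE hI

end
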